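/- arXiv:1609.08253 — 3 statements merged into one kernel-verified Lean document; each statement's English description precedes it below -/
import Mathlib

section
/- Let p be a prime, d ≥ 1, and let e₁ ≤ e₂ ≤ ⋯ ≤ e_d be positive integers. Let A = ∏_{i=1}^d ℤ/p^{e_i}ℤ and let R(A) be the set of integer d × d matrices M = (m_{ij}) such that p^{e_i − e_j} divides m_{ij} for all 1 ≤ j ≤ i ≤ d. Then R(A) is a subring of the d × d integer matrices, and for each M ∈ R(A) there is a unique additive endomorphism ψ(M) of A satisfying ψ(M)(π(a)) = π(M a) for all a ∈ ℤ^d, where π : ℤ^d → A is the componentwise reduction map a ↦ (a₁ mod p^{e₁}, …, a_d mod p^{e_d}); moreover, the map ψ : R(A) → End(A) is a surjective ring homomorphism. -/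
/-!
Write `π : ℤ^d → A` for componentwise reduction. The divisibility conditions defining `R(A)` say
exactly that `M` maps `ker π = ∏ p^{eᵢ} ℤ` into itself (`dvd_iff_map_ker`): for `j ≤ i` the
condition `p^{eᵢ} ∣ m_{ij} p^{eⱼ}` is `p^{eᵢ - eⱼ} ∣ m_{ij}`, and for `j > i` it is automatic by
monotonicity of `e`. Matrices preserving `ker π` visibly form a subring, and each of them descends
along the surjection `π` to a unique endomorphism of `A`; uniqueness makes `M ↦ ψ(M)` a ring
homomorphism. Conversely, an endomorphism `g` is lifted to the matrix whose `j`-th column is any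
integer lift of `g (π (bⱼ))`, with `bⱼ` the `j`-th
standard basis vector; since this matrix induces `g`, it preserves `ker π`.
-/

namespace HillarRhea

variable {p d : ℕ} {e : Fin d → ℕ}

/-- The componentwise reduction map `π : ℤ^d → ∏ i, ℤ/p^{eᵢ}ℤ`. -/
def red (p : ℕ) (e : Fin d → ℕ) : (Fin d → ℤ) →+ (∀ i : Fin d, ZMod (p ^ e i)) where
  toFun a := fun i => (a i : ZMod (p ^ e i))
  map_zero' := by ext i; simp
  map_add' a b := by ext i; simp

/-- A set-theoretic section of `red`, taking a preferred integer representative in each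
coordinate. -/
def sec (p : ℕ) (e : Fin d → ℕ) (x : ∀ i : Fin d, ZMod (p ^ e i)) : Fin d → ℤ :=
  fun i => (x i).cast

lemma red_apply (a : Fin d → ℤ) : red p e a = fun i => (a i : ZMod (p ^ e i)) := rfl

lemma red_sec : Function.RightInverse (sec p e) (red p e) := fun x => by
  ext i; simp [red, sec]

lemma red_eq_zero_iff (a : Fin d → ℤ) : red p e a = 0 ↔ ∀ i, (p : ℤ) ^ e i ∣ a i := by
  rw [funext_iff]
  refine forall_congr' fun i => ?_
  simpa [red] using ZMod.intCast_zmod_eq_zero_iff_dvd (a i) (p ^ e i)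

/-- The subring of integer matrices that map the kernel of `red` into itself. -/
def kerStable (p : ℕ) (e : Fin d → ℕ) : Subring (Matrix (Fin d) (Fin d) ℤ) where
  carrier := {M | ∀ a, red p e a = 0 → red p e (M.mulVec a) = 0}
  mul_mem' {M N} hM hN a ha := by
    rw [← Matrix.mulVec_mulVec]; exact hM _ (hN a ha)
  one_mem' a ha := by simpa using ha
  add_mem' {M N} hM hN a ha := by
    rw [Matrix.add_mulVec, map_add, hM a ha, hN a ha, add_zero]
  zero_mem' a _ := by simp
  neg_mem' {M} hM a ha := by
    rw [Matrix.neg_mulVec, map_neg, hM a ha, neg_zero]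

/-- The divisibility conditions defining `R(A)` are equivalent to stability of the kernel of the
reduction map. -/
lemma dvd_iff_map_ker (hp : p.Prime) (hmono : Monotone e) (M : Matrix (Fin d) (Fin d) ℤ) :
    M ∈ kerStable p e ↔ ∀ i j : Fin d, j ≤ i → (p : ℤ) ^ (e i - e j) ∣ M i j := by
  have hp0 : (p : ℤ) ≠ 0 := by exact_mod_cast hp.ne_zero
  constructor
  · intro h i j hji
    -- test stability on the vector with sole nonzero entry `p^{eⱼ}`, in position `j`
    have h1 := (red_eq_zero_iff _).1 (h (Pi.single j ((p : ℤ) ^ e j)) ((red_eq_zero_iff _).2 (by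
      intro k
      by_cases hk : k = j
      · subst hk; simp
      · simp [hk]))) i
    rw [Matrix.mulVec_single] at h1
    have h2 : (p : ℤ) ^ (e i - e j) * (p : ℤ) ^ e j ∣ M i j * (p : ℤ) ^ e j := by
      rw [← pow_add, Nat.sub_add_cancel (hmono hji)]
      simpa using h1
    exact (mul_dvd_mul_iff_right (pow_ne_zero _ hp0)).1 h2
  · intro h a ha
    rw [red_eq_zero_iff] at ha ⊢
    intro i
    rw [Matrix.mulVec, dotProduct]
    refine Finset.dvd_sum fun j _ => ?_
    rcases le_total j i with hji | hij
    · have := mul_dvd_mul (h i j hji) (ha j)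
      rwa [← pow_add, Nat.sub_add_cancel (hmono hji)] at this
    · exact ((pow_dvd_pow _ (hmono hij)).trans (ha j)).mul_left _

/-- The endomorphism of `A` induced by a matrix preserving the kernel of the reduction map. -/
def induced (M : kerStable p e) : AddMonoid.End (∀ i : Fin d, ZMod (p ^ e i)) :=
  (red p e).liftOfRightInverse (sec p e) red_sec
    ⟨(red p e).comp (Matrix.mulVecLin M.1).toAddMonoidHom, fun a ha => M.2 a ha⟩

lemma induced_red (M : kerStable p e) (a : Fin d → ℤ) :
    induced M (red p e a) = red p e (M.1.mulVec a) :=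
  (red p e).liftOfRightInverse_comp_apply (sec p e) red_sec _ a

lemma end_ext {f g : AddMonoid.End (∀ i : Fin d, ZMod (p ^ e i))}
    (h : ∀ a, f (red p e a) = g (red p e a)) : f = g :=
  AddMonoidHom.ext fun x => by
    have hx := h (sec p e x)
    rw [red_sec x] at hx
    exact hx

/-- The ring homomorphism `ψ : R(A) → End(A)`. -/
def inducedHom (p : ℕ) (e : Fin d → ℕ) :
    kerStable p e →+* AddMonoid.End (∀ i : Fin d, ZMod (p ^ e i)) where
  toFun := induced
  map_one' := end_ext fun a => by
    rw [induced_red]; simp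
  map_mul' M N := end_ext fun a => by
    change _ = induced M (induced N (red p e a))
    simp only [induced_red]
    simp
  map_zero' := end_ext fun a => by
    rw [induced_red]; simp
  map_add' M N := end_ext fun a => by
    change _ = induced M (red p e a) + induced N (red p e a)
    simp only [induced_red]
    simp [Matrix.add_mulVec]

/-- Every endomorphism of `A` is induced by an integer matrix: lift the images of the standard
generators to the columns. -/
lemma exists_matrix (g : AddMonoid.End (∀ i : Fin d, ZMod (p ^ e i))) :
    ∃ M : Matrix (Fin d) (Fin d) ℤ, ∀ a, g (red p e a) = red p e (M.mulVec a) := by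
  let M : Matrix (Fin d) (Fin d) ℤ :=
    Matrix.of fun i j => sec p e (g (red p e (Pi.single j 1))) i
  have key : AddMonoidHom.comp g (red p e) =
      (red p e).comp (Matrix.mulVecLin M).toAddMonoidHom := by
    ext j : 2
    change g (red p e (Pi.single j 1)) = red p e (M.mulVec (Pi.single j 1))
    rw [Matrix.mulVec_single_one]
    exact (red_sec _).symm
  exact ⟨M, fun a => DFunLike.congr_fun key a⟩

end HillarRhea

open HillarRhea in
/-- Ranum; Hillar–Rhea: for `A = ∏ i, ℤ/p^{eᵢ}ℤ` with
`e₁ ≤ ⋯ ≤ e_d` positive, the set `R(A)` of integer matrices `(m_{ij})` with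
`p^{eᵢ - eⱼ} ∣ m_{ij}` for all `j ≤ i` is a subring of the `d × d` integer
matrices, and the map `ψ` sending `M ∈ R(A)` to the unique additive endomorphism
of `A` with `ψ(M)(π a) = π (M a)` (where `π : ℤ^d → A` is componentwise reduction)
is a surjective ring homomorphism `R(A) → End(A)`. -/
theorem hillar_rhea_endomorphisms (p : ℕ) (hp : p.Prime) (d : ℕ) (hd : 1 ≤ d)
    (e : Fin d → ℕ) (hpos : ∀ i, 0 < e i) (hmono : Monotone e) :
    ∃ R : Subring (Matrix (Fin d) (Fin d) ℤ),
      (∀ M : Matrix (Fin d) (Fin d) ℤ,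
        M ∈ R ↔ ∀ i j : Fin d, j ≤ i → (p : ℤ) ^ (e i - e j) ∣ M i j) ∧
      ∃ ψ : R →+* AddMonoid.End (∀ i : Fin d, ZMod (p ^ e i)),
        (∀ (M : R) (a : Fin d → ℤ),
          ψ M (fun i => ((a i : ZMod (p ^ e i)))) =
            fun i => (( (Matrix.mulVec (M : Matrix (Fin d) (Fin d) ℤ) a) i : ZMod (p ^ e i)))) ∧
        (∀ (M : R) (g : AddMonoid.End (∀ i : Fin d, ZMod (p ^ e i))),
          (∀ a : Fin d → ℤ,
            g (fun i => ((a i : ZMod (p ^ e i)))) =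
              fun i => (( (Matrix.mulVec (M : Matrix (Fin d) (Fin d) ℤ) a) i : ZMod (p ^ e i)))) →
          g = ψ M) ∧
        Function.Surjective ψ := by
  refine ⟨kerStable p e, dvd_iff_map_ker hp hmono, inducedHom p e, induced_red, ?_, ?_⟩
  · intro M g hg
    exact end_ext fun a => (hg a).trans (induced_red M a).symm
  · intro g
    obtain ⟨M, hM⟩ := exists_matrix g
    have hmem : M ∈ kerStable p e := fun a ha => by rw [← hM, ha, map_zero]
    exact ⟨⟨M, hmem⟩, end_ext fun a => (induced_red ⟨M, hmem⟩ a).trans (hM a).symm⟩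
end

section
/- Let p be a prime, d ≥ 1, and let e₁ ≤ e₂ ≤ ⋯ ≤ e_d be positive integers. Let A = ∏_{i=1}^d ℤ/p^{e_i}ℤ, let R(A) be the ring of integer d × d matrices (m_{ij}) with p^{e_i − e_j} ∣ m_{ij} for all j ≤ i, and let ψ : R(A) → End(A) be the surjective ring homomorphism with ψ(M)(π(a)) = π(M a) for all a ∈ ℤ^d, where π : ℤ^d → A is componentwise reduction. Then for M ∈ R(A), the endomorphism ψ(M) is an automorphism of A if and only if the matrix M reduced entrywise modulo p is invertible over the field ℤ/pℤ, i.e. det(M mod p) ≠ 0 in ℤ/pℤ. -/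
/-!
Since `A` is finite, `ψ M` is bijective iff it is surjective, and surjectivity on `A` is equivalent
to surjectivity modulo `p`.

If `ψ M` is surjective, integer lifts of preimages of the standard generators are the columns of
a matrix `B` with `M * B ≡ 1` modulo `p` (as every `e i` is positive), so `det M` is a unit
modulo `p`. Conversely, if `p ∤ det M`, then `u * det M + t * p ^ n = 1` with `n = ∑ i, e i`, and
`M * (u • adjugate M) = (u * det M) • 1` acts as the identity on `A`, which is killed by `p ^ n`;
hence `ψ M` is surjective.
-/

/-- Ranum; Hillar–Rhea: with `A = ∏ i, ℤ/p^{eᵢ}ℤ`, `R(A)` the ring of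
integer matrices `(m_{ij})` with `p^{eᵢ - eⱼ} ∣ m_{ij}` for `j ≤ i`, and
`ψ : R(A) → End(A)` the surjective ring homomorphism determined by
`ψ(M)(π a) = π (M a)`, an endomorphism `ψ(M)` is an automorphism of `A` if and only
if `M` reduced entrywise mod `p` is invertible over `ℤ/pℤ`, i.e. `det (M mod p) ≠ 0`. -/
theorem hillar_rhea_automorphism_criterion (p : ℕ) (hp : p.Prime) (d : ℕ) (hd : 1 ≤ d)
    (e : Fin d → ℕ) (hpos : ∀ i, 0 < e i) (hmono : Monotone e)
    (R : Subring (Matrix (Fin d) (Fin d) ℤ))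
    (hR : ∀ M : Matrix (Fin d) (Fin d) ℤ,
      M ∈ R ↔ ∀ i j : Fin d, j ≤ i → (p : ℤ) ^ (e i - e j) ∣ M i j)
    (ψ : R →+* AddMonoid.End (∀ i : Fin d, ZMod (p ^ e i)))
    (hψ : ∀ (M : R) (a : Fin d → ℤ),
      ψ M (fun i => ((a i : ZMod (p ^ e i)))) =
        fun i => (((Matrix.mulVec (M : Matrix (Fin d) (Fin d) ℤ) a) i : ZMod (p ^ e i))))
    (hψsurj : Function.Surjective ψ)
    (M : R) :
    Function.Bijective (ψ M) ↔
      Matrix.det ((M : Matrix (Fin d) (Fin d) ℤ).map (fun x : ℤ => (x : ZMod p))) ≠ 0 := by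
  haveI : Fact p.Prime := ⟨hp⟩
  have hdet : ∀ N : Matrix (Fin d) (Fin d) ℤ,
      Matrix.det (N.map (fun x : ℤ => (x : ZMod p))) = ((N.det : ℤ) : ZMod p) := fun N =>
    ((Int.castRingHom (ZMod p)).map_det N).symm
  have hlift : ∀ x : (∀ i : Fin d, ZMod (p ^ e i)),
      ∃ a : Fin d → ℤ, (fun i => (a i : ZMod (p ^ e i))) = x := by
    intro x
    choose a ha using fun i => ZMod.intCast_surjective (x i)
    exact ⟨a, funext ha⟩
  constructor
  · intro hbij
    have hcol : ∀ j : Fin d, ∃ b : Fin d → ℤ, ∀ i,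
        ((Matrix.mulVec (M : Matrix (Fin d) (Fin d) ℤ) b i : ℤ) : ZMod (p ^ e i)) =
          (((1 : Matrix (Fin d) (Fin d) ℤ) i j : ℤ) : ZMod (p ^ e i)) := by
      intro j
      obtain ⟨x, hx⟩ := hbij.2
        (fun i => (((1 : Matrix (Fin d) (Fin d) ℤ) i j : ℤ) : ZMod (p ^ e i)))
      obtain ⟨b, rfl⟩ := hlift x
      rw [hψ] at hx
      exact ⟨b, fun i => congrFun hx i⟩
    choose b hb using hcol
    -- The columns `b j` form a right inverse of `M` modulo `p`.
    let B : Matrix (Fin d) (Fin d) ℤ := Matrix.of fun i j => b j i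
    have hMB : ((M : Matrix (Fin d) (Fin d) ℤ) * B).map (fun x : ℤ => (x : ZMod p)) =
        (1 : Matrix (Fin d) (Fin d) ℤ).map (fun x : ℤ => (x : ZMod p)) := by
      ext i j
      have h := (ZMod.intCast_eq_intCast_iff_dvd_sub _ _ _).1 (hb j i)
      have hpe : (p : ℤ) ∣ ((p ^ e i : ℕ) : ℤ) := by
        exact_mod_cast dvd_pow_self p (hpos i).ne'
      exact (ZMod.intCast_eq_intCast_iff_dvd_sub _ _ _).2 (hpe.trans h)
    have h1 := congrArg Matrix.det hMB
    rw [hdet, hdet, Matrix.det_mul, Matrix.det_one, Int.cast_mul, Int.cast_one] at h1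
    rw [hdet]
    exact left_ne_zero_of_mul_eq_one h1
  · intro hne
    rw [hdet, Ne, ZMod.intCast_zmod_eq_zero_iff_dvd] at hne
    have hcop : IsCoprime (M : Matrix (Fin d) (Fin d) ℤ).det ((p : ℤ) ^ (∑ i, e i)) :=
      (((Nat.prime_iff_prime_int.1 hp).coprime_iff_not_dvd.2 hne).symm).pow_right
    obtain ⟨u, t, hut⟩ := hcop
    haveI : ∀ i, NeZero (p ^ e i) := fun i => ⟨pow_ne_zero _ hp.ne_zero⟩
    refine Finite.surjective_iff_bijective.1 fun y => ?_
    obtain ⟨a, rfl⟩ := hlift y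
    refine ⟨_, (hψ M (u • Matrix.mulVec (M : Matrix (Fin d) (Fin d) ℤ).adjugate a)).trans ?_⟩
    funext i
    have hval : Matrix.mulVec (M : Matrix (Fin d) (Fin d) ℤ)
        (u • Matrix.mulVec (M : Matrix (Fin d) (Fin d) ℤ).adjugate a) i =
          u * (M : Matrix (Fin d) (Fin d) ℤ).det * a i := by
      rw [Matrix.mulVec_smul, Matrix.mulVec_mulVec, Matrix.mul_adjugate, Matrix.smul_mulVec,
        Matrix.one_mulVec]
      simp [mul_assoc]
    rw [hval, ZMod.intCast_eq_intCast_iff_dvd_sub]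
    have hle : e i ≤ ∑ i, e i := Finset.single_le_sum (fun _ _ => Nat.zero_le _) (Finset.mem_univ i)
    have hdvd : ((p ^ e i : ℕ) : ℤ) ∣ (p : ℤ) ^ (∑ i, e i) := by
      push_cast
      exact pow_dvd_pow _ hle
    refine hdvd.trans ⟨t * a i, ?_⟩
    linear_combination (-a i) * hut
end

section
/- Let G and H be finite groups whose orders are coprime. Then the automorphism group of the direct product G × H is isomorphic to the direct product Aut(G) × Aut(H) of the automorphism groups; the isomorphism sends a pair (α, β) to the automorphism (g, h) ↦ (α g, β h), and every automorphism of G × H is of this form. -/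
/-!
A homomorphism between finite groups of coprime orders is trivial, because the order of each value
divides both group orders (`hom_eq_one_of_coprime`). For an automorphism `φ` of `G × H`, this kills
the two off-diagonal components `G → H` and `H → G`, so `φ (g, h) = (a g, b h)` for endomorphisms
`a` of `G` and `b` of `H`. These are injective since `φ` is, hence bijective by finiteness, and so
the injective homomorphism `(α, β) ↦ α × β` is also surjective.
-/

theorem hom_eq_one_of_coprime {A B : Type*} [Group A] [Group B]
    (hcop : Nat.Coprime (Nat.card A) (Nat.card B)) (f : A →* B) (x : A) : f x = 1 := by
  rw [← orderOf_eq_one_iff]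
  exact Nat.eq_one_of_dvd_coprimes hcop
    ((orderOf_map_dvd f x).trans (orderOf_dvd_natCard x)) (orderOf_dvd_natCard (f x))

/-- The homomorphism sending `(α, β)` to the automorphism `(g, h) ↦ (α g, β h)`. -/
def autProdHom (G H : Type*) [Group G] [Group H] :
    MulAut G × MulAut H →* MulAut (G × H) where
  toFun p := MulEquiv.prodCongr p.1 p.2
  map_one' := rfl
  map_mul' _ _ := rfl

theorem autProdHom_injective (G H : Type*) [Group G] [Group H] :
    Function.Injective (autProdHom G H) := by
  rintro ⟨α, β⟩ ⟨α', β'⟩ heq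
  have key (g : G) (h : H) : (α g, β h) = (α' g, β' h) := DFunLike.congr_fun heq (g, h)
  refine Prod.ext (MulEquiv.ext fun g => ?_) (MulEquiv.ext fun h => ?_)
  · exact congrArg Prod.fst (key g 1)
  · exact congrArg Prod.snd (key 1 h)

theorem autProdHom_surjective {G H : Type*} [Group G] [Group H] [Finite G] [Finite H]
    (hcop : Nat.Coprime (Nat.card G) (Nat.card H)) :
    Function.Surjective (autProdHom G H) := by
  intro φ
  let a : G →* G := (MonoidHom.fst G H).comp (φ.toMonoidHom.comp (MonoidHom.inl G H))
  let b : H →* H := (MonoidHom.snd G H).comp (φ.toMonoidHom.comp (MonoidHom.inr G H))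
  have hl (g : G) : φ (g, 1) = (a g, 1) := Prod.ext rfl
    (hom_eq_one_of_coprime hcop
      ((MonoidHom.snd G H).comp (φ.toMonoidHom.comp (MonoidHom.inl G H))) g)
  have hr (h : H) : φ (1, h) = (1, b h) := Prod.ext
    (hom_eq_one_of_coprime hcop.symm
      ((MonoidHom.fst G H).comp (φ.toMonoidHom.comp (MonoidHom.inr G H))) h) rfl
  have ha : Function.Injective a := fun x y hxy =>
    congrArg Prod.fst (φ.injective (a₁ := (x, 1)) (a₂ := (y, 1)) (by rw [hl, hl, hxy]))
  have hb : Function.Injective b := fun x y hxy =>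
    congrArg Prod.snd (φ.injective (a₁ := (1, x)) (a₂ := (1, y)) (by rw [hr, hr, hxy]))
  refine ⟨(MulEquiv.ofBijective a (Finite.injective_iff_bijective.mp ha),
    MulEquiv.ofBijective b (Finite.injective_iff_bijective.mp hb)), MulEquiv.ext ?_⟩
  rintro ⟨g, h⟩
  change (a g, b h) = φ (g, h)
  have hgh : ((g, h) : G × H) = (g, 1) * (1, h) := by simp
  rw [hgh, map_mul, hl, hr]
  simp

/-- If `G` and `H` are finite groups of coprime orders, then
`Aut(G × H) ≅ Aut(G) × Aut(H)`, via the isomorphism sending `(α, β)` to the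
automorphism `(g, h) ↦ (α g, β h)`; surjectivity of this isomorphism says that
every automorphism of `G × H` has this form. -/
theorem aut_prod_of_coprime {G H : Type*} [Group G] [Group H] [Finite G] [Finite H]
    (hcop : Nat.Coprime (Nat.card G) (Nat.card H)) :
    ∃ Φ : MulAut G × MulAut H ≃* MulAut (G × H),
      ∀ (α : MulAut G) (β : MulAut H) (g : G) (h : H),
        Φ (α, β) (g, h) = (α g, β h) := by
  exact ⟨MulEquiv.ofBijective (autProdHom G H)
    ⟨autProdHom_injective G H, autProdHom_surjective hcop⟩, fun _ _ _ _ => rfl⟩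
end
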